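/- arXiv:2001.03132 — 6 statements merged into one kernel-verified Lean document; each statement's English description precedes it below -/
import Mathlib

section
/- Let b, c, d be real numbers with b > −c and 0 ≤ c ≤ d. Define φ : ℝ → ℝ by φ(Z) = (b·Z − c·d)/(Z + b + c + d) if Z > −c, and φ(Z) = Z if Z ≤ −c. Then φ is strictly increasing on ℝ. -/
/-! The branch `(b * Z - c * d) / (Z + b + c + d)` is a Möbius map of determinant
`b * (b + c + d) + c * d = (b + c) * (b + d) > 0`, so it increases wherever its denominator is
positive, in particular on `[-c, ∞)`. Its value at `-c` is `-c`, so it glues there with the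
identity. -/

open Set

theorem strictMono_ite_lt {α β : Type*} [LinearOrder α] [Preorder β] {f g : α → β} {a : α}
    (hf : StrictMonoOn f (Ici a)) (hg : StrictMonoOn g (Iic a)) (hfg : f a = g a) :
    StrictMono fun x => if a < x then f x else g x := by
  have eqOn_Iic : EqOn g (fun x => if a < x then f x else g x) (Iic a) :=
    fun _ hx => (if_neg (not_lt.2 hx)).symm
  have eqOn_Ici : EqOn f (fun x => if a < x then f x else g x) (Ici a) := by
    intro x hx
    rcases eq_or_lt_of_le (mem_Ici.1 hx) with rfl | hax
    · simpa using hfg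
    · exact (if_pos hax).symm
  exact (hg.congr eqOn_Iic).Iic_union_Ici (hf.congr eqOn_Ici)

theorem mul_sub_div_add_apply_neg {K : Type*} [Field K] {b c d : K} (hbd : b + d ≠ 0) :
    (b * -c - c * d) / (-c + b + c + d) = -c := by
  have denom_eq : -c + b + c + d = b + d := by ring
  rw [denom_eq, div_eq_iff hbd]
  ring

section LinearOrderedField

variable {K : Type*} [Field K] [LinearOrder K] [IsStrictOrderedRing K]

theorem strictMonoOn_linear_div_linear {p q r s : K} (hdet : 0 < p * s - q * r) :
    StrictMonoOn (fun x => (p * x + q) / (r * x + s)) {x | 0 < r * x + s} := by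
  intro x hx y hy hxy
  have cross_diff : (p * y + q) * (r * x + s) - (p * x + q) * (r * y + s) =
      (p * s - q * r) * (y - x) := by ring
  refine (div_lt_div_iff₀ hx hy).2 (sub_pos.1 ?_)
  rw [cross_diff]
  exact mul_pos hdet (sub_pos.2 hxy)

theorem strictMonoOn_Ici_mul_sub_div_add {b c d : K} (hbc : -c < b) (hbd : -d < b) :
    StrictMonoOn (fun Z => (b * Z - c * d) / (Z + b + c + d)) (Ici (-c)) := by
  have det_pos : 0 < b * (b + c + d) - -(c * d) * 1 := by
    have factored : 0 < (b + c) * (b + d) :=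
      mul_pos (neg_lt_iff_pos_add.1 hbc) (neg_lt_iff_pos_add.1 hbd)
    linarith
  have denom_pos : Ici (-c) ⊆ {Z | 0 < 1 * Z + (b + c + d)} := by
    intro Z (hZ : -c ≤ Z)
    change 0 < 1 * Z + (b + c + d)
    linarith
  simpa only [one_mul, ← sub_eq_add_neg, ← add_assoc] using
    (strictMonoOn_linear_div_linear det_pos).mono denom_pos

theorem stmt8_general {b c d : K} (hbc : -c < b) (hbd : -d < b) :
    StrictMono fun Z : K => if -c < Z then (b * Z - c * d) / (Z + b + c + d) else Z :=
  strictMono_ite_lt (strictMonoOn_Ici_mul_sub_div_add hbc hbd) (strictMono_id.strictMonoOn _)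
    (mul_sub_div_add_apply_neg (neg_lt_iff_pos_add.1 hbd).ne')

end LinearOrderedField

theorem stmt8 (b c d : ℝ) (hb : -c < b) (hc : 0 ≤ c) (hcd : c ≤ d) :
    StrictMono (fun Z : ℝ => if -c < Z then (b * Z - c * d) / (Z + b + c + d) else Z) :=
  stmt8_general hb ((neg_le_neg hcd).trans_lt hb)
end

section
/- Let β ≥ 0, let f : ℝ≥0 → ℝ≥0 be strictly increasing with f(0) = 0, and let n, s be naturals with n − s ≥ 4. Then the function m ↦ A(n,m,s) on the real interval [0, (n−s)/2] is strictly increasing if T(n,s) > β, strictly decreasing if T(n,s) < β, and constant if T(n,s) = β. -/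
open scoped NNReal

noncomputable section

/-- T(n,s) = (n−s−3)·f(n−s−1) − (n−s−2)·f(n−s−2). -/
def Tval (f : ℝ≥0 → ℝ≥0) (n s : ℕ) : ℝ :=
  ((n : ℝ) - s - 3) * ((f ((n - s - 1 : ℕ) : ℝ≥0) : ℝ≥0) : ℝ)
    - ((n : ℝ) - s - 2) * ((f ((n - s - 2 : ℕ) : ℝ≥0) : ℝ≥0) : ℝ)

/-- D₁ = f(n−s−1)+β. -/
def D1val (β : ℝ) (f : ℝ≥0 → ℝ≥0) (n s : ℕ) : ℝ :=
  ((f ((n - s - 1 : ℕ) : ℝ≥0) : ℝ≥0) : ℝ) + β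

/-- D₂ = f(n−s−2)+β. -/
def D2val (β : ℝ) (f : ℝ≥0 → ℝ≥0) (n s : ℕ) : ℝ :=
  ((f ((n - s - 2 : ℕ) : ℝ≥0) : ℝ≥0) : ℝ) + β

/-- A(n,m,s), with `m` a real variable. -/
def Aval (β : ℝ) (f : ℝ≥0 → ℝ≥0) (n : ℕ) (m : ℝ) (s : ℕ) : ℝ :=
  (D1val β f n s * D2val β f n s / (3 * D1val β f n s - 2 * D2val β f n s)) *
      (3 * (β - Tval f n s) /
          (m * (3 * D1val β f n s - 2 * D2val β f n s) + ((n : ℝ) - s) * D2val β f n s) - 1)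
    + β

/-- B(s) = β/s − ((s−1)/s)·f(1). -/
def Bval (β : ℝ) (f : ℝ≥0 → ℝ≥0) (s : ℕ) : ℝ :=
  β / (s : ℝ) - (((s : ℝ) - 1) / (s : ℝ)) * ((f 1 : ℝ≥0) : ℝ)

/-- Q(n,m,s). -/
def Qval (β : ℝ) (f : ℝ≥0 → ℝ≥0) (n : ℕ) (m : ℝ) (s : ℕ) : ℝ :=
  if Aval β f n m s > -((f 1 : ℝ≥0) : ℝ) then
    (Aval β f n m s * Bval β f s - ((f 1 : ℝ≥0) : ℝ) * ((f ((n - s : ℕ) : ℝ≥0) : ℝ≥0) : ℝ)) /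
      (Aval β f n m s + Bval β f s + ((f 1 : ℝ≥0) : ℝ) + ((f ((n - s : ℕ) : ℝ≥0) : ℝ≥0) : ℝ))
  else Aval β f n m s

/-!
Right of its pole, `m ↦ A(n,m,s)` is an increasing affine function of `c / (m * e + d)`, where
`e = 3D₁ - 2D₂ > 0`, `d = (n - s)D₂` and `c = 3(β - T(n,s))`. Its direction is therefore decided by
the sign of `c`. The pole `-d / e` is negative, so it lies outside the range of `m`.
-/

section LinearFractional

variable {𝕜 : Type*} [Field 𝕜] [LinearOrder 𝕜] [IsStrictOrderedRing 𝕜] {c e : 𝕜}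

theorem strictAntiOn_div_mul_add (hc : 0 < c) (he : 0 < e) (d : 𝕜) :
    StrictAntiOn (fun x ↦ c / (x * e + d)) (Set.Ioi (-(d / e))) := by
  intro x hx y _ hxy
  have hpos : 0 < x * e + d := by
    rwa [Set.mem_Ioi, ← neg_div, div_lt_iff₀ he, neg_lt_iff_pos_add] at hx
  dsimp only
  gcongr

theorem strictMonoOn_div_mul_add (hc : c < 0) (he : 0 < e) (d : 𝕜) :
    StrictMonoOn (fun x ↦ c / (x * e + d)) (Set.Ioi (-(d / e))) := by
  simpa only [neg_div, neg_neg] using (strictAntiOn_div_mul_add (neg_pos.2 hc) he d).neg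

end LinearFractional

/-- The pole of `m ↦ A(n,m,s)`, i.e. the `m` at which the inner denominator
`m(3D₁ - 2D₂) + (n - s)D₂` vanishes; it bounds the interval on which `A` is monotone. The formula
presupposes `3D₁ ≠ 2D₂`. -/
def Apole (β : ℝ) (f : ℝ≥0 → ℝ≥0) (n s : ℕ) : ℝ :=
  -(((n : ℝ) - s) * D2val β f n s / (3 * D1val β f n s - 2 * D2val β f n s))

section Parameters

variable {β : ℝ} {f : ℝ≥0 → ℝ≥0} {n s : ℕ}

theorem D2val_pos (hβ : 0 ≤ β) (hf : StrictMono f) (hns : s + 3 ≤ n) : 0 < D2val β f n s := by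
  have harg : (0 : ℝ≥0) < (n - s - 2 : ℕ) := by exact_mod_cast (by lia : 0 < n - s - 2)
  exact add_pos_of_pos_of_nonneg (NNReal.coe_pos.2 (pos_of_gt (hf harg))) hβ

theorem D2val_lt_D1val (β : ℝ) (hf : StrictMono f) (hns : s + 2 ≤ n) :
    D2val β f n s < D1val β f n s := by
  have harg : ((n - s - 2 : ℕ) : ℝ≥0) < (n - s - 1 : ℕ) := Nat.cast_lt.2 (by lia)
  exact add_lt_add_left (NNReal.coe_lt_coe.2 (hf harg)) β

theorem three_mul_D1val_sub_two_mul_D2val_pos (hβ : 0 ≤ β) (hf : StrictMono f)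
    (hns : s + 3 ≤ n) : 0 < 3 * D1val β f n s - 2 * D2val β f n s := by
  linarith [D2val_pos hβ hf hns, D2val_lt_D1val β hf (by lia : s + 2 ≤ n)]

theorem D1val_mul_D2val_div_pos (hβ : 0 ≤ β) (hf : StrictMono f) (hns : s + 3 ≤ n) :
    0 < D1val β f n s * D2val β f n s / (3 * D1val β f n s - 2 * D2val β f n s) := by
  have hD₂ := D2val_pos hβ hf hns
  have hD₁ := hD₂.trans (D2val_lt_D1val β hf (by lia))
  exact div_pos (mul_pos hD₁ hD₂) (three_mul_D1val_sub_two_mul_D2val_pos hβ hf hns)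

theorem Apole_neg (hβ : 0 ≤ β) (hf : StrictMono f) (hns : s + 3 ≤ n) : Apole β f n s < 0 := by
  have hsub : 0 < (n : ℝ) - s := sub_pos.2 (Nat.cast_lt.2 (by lia))
  exact neg_neg_of_pos (div_pos (mul_pos hsub (D2val_pos hβ hf hns))
    (three_mul_D1val_sub_two_mul_D2val_pos hβ hf hns))

theorem Aval_eq_of_Tval_eq (hT : Tval f n s = β) (m : ℝ) :
    Aval β f n m s =
      β - D1val β f n s * D2val β f n s / (3 * D1val β f n s - 2 * D2val β f n s) := by
  rw [Aval, hT, sub_self, mul_zero, zero_div]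
  ring

end Parameters

theorem stmt9_general (β : ℝ) (hβ : 0 ≤ β) (f : ℝ≥0 → ℝ≥0) (hf : StrictMono f)
    (n s : ℕ) (hns : s + 3 ≤ n) :
    (Tval f n s > β → StrictMonoOn (fun m : ℝ ↦ Aval β f n m s) (Set.Ioi (Apole β f n s))) ∧
    (Tval f n s < β → StrictAntiOn (fun m : ℝ ↦ Aval β f n m s) (Set.Ioi (Apole β f n s))) ∧
    (Tval f n s = β →
      ∀ m₁ ∈ Set.Ioi (Apole β f n s), ∀ m₂ ∈ Set.Ioi (Apole β f n s),
        Aval β f n m₁ s = Aval β f n m₂ s) := by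
  have he := three_mul_D1val_sub_two_mul_D2val_pos hβ hf hns
  have hk := D1val_mul_D2val_div_pos hβ hf hns
  have haffine : StrictMono fun t : ℝ ↦
      D1val β f n s * D2val β f n s / (3 * D1val β f n s - 2 * D2val β f n s) * (t - 1) + β :=
    ((strictMono_id.add_const (-1)).const_mul hk).add_const β
  refine ⟨fun hT ↦ ?_, fun hT ↦ ?_, fun hT m₁ _ m₂ _ ↦ ?_⟩
  · have hc : 3 * (β - Tval f n s) < 0 := by linarith
    exact haffine.comp_strictMonoOn (strictMonoOn_div_mul_add hc he _)
  · have hc : 0 < 3 * (β - Tval f n s) := by linarith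
    exact haffine.comp_strictAntiOn (strictAntiOn_div_mul_add hc he _)
  · rw [Aval_eq_of_Tval_eq hT, Aval_eq_of_Tval_eq hT]

theorem stmt9 (β : ℝ) (hβ : 0 ≤ β)
    (f : ℝ≥0 → ℝ≥0) (hf : StrictMono f) (hf0 : f 0 = 0)
    (n s : ℕ) (hns : s + 4 ≤ n) :
    (Tval f n s > β →
      StrictMonoOn (fun m : ℝ => Aval β f n m s) (Set.Icc 0 (((n : ℝ) - s) / 2))) ∧
    (Tval f n s < β →
      StrictAntiOn (fun m : ℝ => Aval β f n m s) (Set.Icc 0 (((n : ℝ) - s) / 2))) ∧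
    (Tval f n s = β →
      ∀ m₁ ∈ Set.Icc (0 : ℝ) (((n : ℝ) - s) / 2), ∀ m₂ ∈ Set.Icc (0 : ℝ) (((n : ℝ) - s) / 2),
        Aval β f n m₁ s = Aval β f n m₂ s) := by
  have hsub : Set.Icc (0 : ℝ) (((n : ℝ) - s) / 2) ⊆ Set.Ioi (Apole β f n s) :=
    fun _ hm ↦ (Apole_neg hβ hf (by lia)).trans_le hm.1
  obtain ⟨hmono, hanti, hconst⟩ := stmt9_general β hβ f hf n s (by lia)
  exact ⟨fun hT ↦ (hmono hT).mono hsub, fun hT ↦ (hanti hT).mono hsub,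
    fun hT m₁ h₁ m₂ h₂ ↦ hconst hT m₁ (hsub h₁) m₂ (hsub h₂)⟩
end
end

section
/- Let β ≥ 0, let f : ℝ≥0 → ℝ≥0 be strictly increasing with f(0) = 0, let n, s, m be naturals with m ≥ 1 and n − s − 2m ≥ 1, and let λ_S ∈ [0,1]. Set ρ = (n−s−2m)(f(n−s−2)+β) / ( 3m(f(n−s−1)+β) + (n−s−2m)(f(n−s−2)+β) ) and λ_R = ρ. Then L^R(n,m,s) = L^M(n,m,s), where L^R(n,m,s) = (1−λ_S)·( λ_R·( (3/(n−s−2m))·β − (1 − 3/(n−s−2m))·f(n−s−1) ) − (1−λ_R)·f(n−s−2) ) − λ_S·f(n−s) and L^M(n,m,s) = (1−λ_S)·( (1−λ_R)·( (1/m)·β − (1 − 1/m)·f(n−s−2) ) − λ_R·f(n−s−1) ) − λ_S·f(n−s). Moreover ρ ∈ [0,1]. -/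
open scoped NNReal

/-!
A loss that charges `β` with probability `p` and otherwise pays out `r` equals `p * (r + β) - r`:
it exceeds the sure loss `-r` by `p * (r + β)`. Mixing two options with weights `ρ` and `1 - ρ` and
exposing only one of them to the penalty therefore costs the same for either choice exactly when
the two weighted excesses agree, `ρ * (p * (r₁ + β)) = (1 - ρ) * (q * (r₂ + β))`, and the given `ρ`
is the solution of this linear equation for `p = 3 / u` and `q = 1 / m`.
-/

/-- The expected loss of a party that pays the penalty `β` with probability `p` and otherwise
collects the reward `r`; a reward counts as a negative loss. -/
def expectedLoss {K : Type*} [CommRing K] (β p r : K) : K :=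
  p * β - (1 - p) * r

/-- The weight `t` that balances `a` against `b`, in the sense that `t * a = (1 - t) * b`; it takes
the junk value `0` when `a + b = 0`. -/
def balancingWeight {K : Type*} [Field K] (a b : K) : K :=
  b / (a + b)

theorem expectedLoss_eq {K : Type*} [CommRing K] (β p r : K) :
    expectedLoss β p r = p * (r + β) - r := by
  unfold expectedLoss
  ring

theorem mix_expectedLoss_eq_iff {K : Type*} [CommRing K] (β p q r₁ r₂ t : K) :
    t * expectedLoss β p r₁ - (1 - t) * r₂ = (1 - t) * expectedLoss β q r₂ - t * r₁ ↔
      t * (p * (r₁ + β)) = (1 - t) * (q * (r₂ + β)) := by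
  rw [expectedLoss_eq, expectedLoss_eq]
  constructor <;> intro h <;> linear_combination h

theorem balancingWeight_mul {K : Type*} [Field K] {a b : K} (h : a + b ≠ 0) :
    balancingWeight a b * a = (1 - balancingWeight a b) * b := by
  unfold balancingWeight
  field_simp
  ring

theorem balancingWeight_mul_mul_left {K : Type*} [Field K] {c : K} (hc : c ≠ 0) (a b : K) :
    balancingWeight (c * a) (c * b) = balancingWeight a b := by
  rw [balancingWeight, ← mul_add, mul_div_mul_left _ _ hc, balancingWeight]

theorem balancingWeight_mem_Icc {K : Type*} [Field K] [LinearOrder K] [IsStrictOrderedRing K]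
    {a b : K} (ha : 0 ≤ a) (hb : 0 ≤ b) : balancingWeight a b ∈ Set.Icc (0 : K) 1 :=
  ⟨div_nonneg hb (add_nonneg ha hb),
    div_le_one_of_le₀ (le_add_of_nonneg_left ha) (add_nonneg ha hb)⟩

theorem mix_expectedLoss_balancingWeight {K : Type*} [Field K] {β k u m r₁ r₂ t : K}
    (hu : u ≠ 0) (hm : m ≠ 0) (h : k * m * (r₁ + β) + u * (r₂ + β) ≠ 0)
    (ht : t = balancingWeight (k * m * (r₁ + β)) (u * (r₂ + β))) :
    t * expectedLoss β (k / u) r₁ - (1 - t) * r₂ =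
      (1 - t) * expectedLoss β (1 / m) r₂ - t * r₁ := by
  have hum : u * m ≠ 0 := mul_ne_zero hu hm
  have ha : k * m * (r₁ + β) = u * m * (k / u * (r₁ + β)) := by field_simp
  have hb : u * (r₂ + β) = u * m * (1 / m * (r₂ + β)) := by field_simp
  rw [ha, hb, ← mul_add] at h
  rw [ha, hb, balancingWeight_mul_mul_left hum] at ht
  rw [mix_expectedLoss_eq_iff, ht]
  exact balancingWeight_mul (right_ne_zero_of_mul h)

theorem coe_apply_pos_of_strictMono {f : ℝ≥0 → ℝ≥0} (hf : StrictMono f) {x : ℝ≥0} (hx : 0 < x) :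
    (0 : ℝ) < f x :=
  NNReal.coe_pos.2 (pos_of_gt (hf hx))

theorem stmt11_general {K : Type*} [Field K] [LinearOrder K] [IsStrictOrderedRing K]
    {β k u m r₁ r₂ ρ : K} (hk : 0 ≤ k) (hu : 0 < u) (hm : 0 < m)
    (h₁ : 0 ≤ r₁ + β) (h₂ : 0 ≤ r₂ + β) (h : k * m * (r₁ + β) + u * (r₂ + β) ≠ 0)
    (hρ : ρ = u * (r₂ + β) / (k * m * (r₁ + β) + u * (r₂ + β))) (lS r₀ : K) :
    (1 - lS) * (ρ * ((k / u) * β - (1 - k / u) * r₁) - (1 - ρ) * r₂) - lS * r₀ =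
        (1 - lS) * ((1 - ρ) * ((1 / m) * β - (1 - 1 / m) * r₂) - ρ * r₁) - lS * r₀ ∧
      ρ ∈ Set.Icc (0 : K) 1 := by
  have hmix : ρ * ((k / u) * β - (1 - k / u) * r₁) - (1 - ρ) * r₂ =
      (1 - ρ) * ((1 / m) * β - (1 - 1 / m) * r₂) - ρ * r₁ :=
    mix_expectedLoss_balancingWeight hu.ne' hm.ne' h hρ
  have hmem : ρ ∈ Set.Icc (0 : K) 1 :=
    hρ ▸ balancingWeight_mem_Icc (by positivity) (by positivity)
  exact ⟨by rw [hmix], hmem⟩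

theorem stmt11 (β : ℝ) (hβ : 0 ≤ β)
    (f : ℝ≥0 → ℝ≥0) (hf : StrictMono f) (hf0 : f 0 = 0)
    (n s m : ℕ) (hm : 1 ≤ m) (hnsm : s + 2 * m + 1 ≤ n)
    (lS : ℝ) (hlS : lS ∈ Set.Icc (0 : ℝ) 1)
    (u f1 f2 fns ρ LR LM : ℝ)
    (hu : u = (n : ℝ) - s - 2 * m)
    (hf1 : f1 = ((f ((n - s - 1 : ℕ) : ℝ≥0) : ℝ≥0) : ℝ))
    (hf2 : f2 = ((f ((n - s - 2 : ℕ) : ℝ≥0) : ℝ≥0) : ℝ))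
    (hfns : fns = ((f ((n - s : ℕ) : ℝ≥0) : ℝ≥0) : ℝ))
    (hρ : ρ = u * (f2 + β) / (3 * m * (f1 + β) + u * (f2 + β)))
    (hLR : LR = (1 - lS) * (ρ * ((3 / u) * β - (1 - 3 / u) * f1) - (1 - ρ) * f2) - lS * fns)
    (hLM : LM = (1 - lS) * ((1 - ρ) * ((1 / (m : ℝ)) * β - (1 - 1 / (m : ℝ)) * f2) - ρ * f1)
      - lS * fns) :
    LR = LM ∧ ρ ∈ Set.Icc (0 : ℝ) 1 := by
  have hu_pos : 0 < u := by
    have : (s : ℝ) + 2 * m + 1 ≤ n := mod_cast hnsm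
    linarith
  have hm_pos : (0 : ℝ) < m := Nat.cast_pos.2 hm
  have hf1_pos : 0 < f1 := hf1 ▸ coe_apply_pos_of_strictMono hf (Nat.cast_pos.2 (by omega))
  have hf2_pos : 0 < f2 := hf2 ▸ coe_apply_pos_of_strictMono hf (Nat.cast_pos.2 (by omega))
  rw [hLR, hLM]
  exact stmt11_general zero_le_three hu_pos hm_pos (by positivity) (by positivity)
    (by positivity) hρ lS fns
end

section
/- Let H be a finite simple graph with vertex set V of size u ≥ 1, and define weights w : V → ℝ by w(i) = (l_i(H)+1)/u if the degree of i is ≠ 1, w(i) = 1/u if i is a leaf lying in a connected component of size exactly 2, and w(i) = 0 otherwise. Then for every vertex i ∈ V ∖ (S(H) ∪ SL(H) ∪ D(H)), the total weight of the closed neighbourhood of i satisfies Σ_{j ∈ N_H[i]} w(j) ≥ 3/u. -/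
/-!
Measure weights in units of `c = 1 / u`. A non-leaf `i` receives one unit for itself and one for
each of its leaf-neighbours, while each remaining neighbour is a non-leaf and carries at least one
unit of its own, so the closed neighbourhood of `i` has weight at least `deg i + 1 ≥ 3` units.
A leaf whose neighbour `j` has at least two leaf-neighbours already sees three units at `j`.
-/

section LeafWeights

variable {V M : Type*} (H : SimpleGraph V)

/-- The set of leaves of a graph. For a vertex with infinitely many neighbours `Set.ncard` is `0`,
so such a vertex is not a leaf. -/
def leaves : Set V := {v | (H.neighborSet v).ncard = 1}

/-- The set of leaf-neighbours of `v`, whose cardinality is `l_v(H)`. -/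
def leafNeighbors (v : V) : Set V := H.neighborSet v ∩ leaves H

variable {H}

variable [H.LocallyFinite]

theorem two_le_ncard_neighborSet {i : V} (hne : (H.neighborSet i).Nonempty) (hi : i ∉ leaves H) :
    2 ≤ (H.neighborSet i).ncard := by
  have hpos : 0 < (H.neighborSet i).ncard := hne.ncard_pos
  have hne_one : (H.neighborSet i).ncard ≠ 1 := hi
  omega

theorem two_le_ncard_leafNeighbors {i j : V} (hij : H.Adj i j) (hi : i ∈ leaves H)
    (hj : (leafNeighbors H j).ncard ≠ 1) : 2 ≤ (leafNeighbors H j).ncard := by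
  have hpos : 0 < (leafNeighbors H j).ncard :=
    (Set.ncard_pos ((H.neighborSet j).toFinite.inter_of_left _)).mpr ⟨i, hij.symm, hi⟩
  omega

theorem notMem_leaves_of_two_le_ncard_leafNeighbors {j : V}
    (hj : 2 ≤ (leafNeighbors H j).ncard) : j ∉ leaves H := by
  intro (hleaf : (H.neighborSet j).ncard = 1)
  have hle : (leafNeighbors H j).ncard ≤ (H.neighborSet j).ncard :=
    Set.ncard_le_ncard Set.inter_subset_left
  omega

variable [AddCommMonoid M] [PartialOrder M] [IsOrderedAddMonoid M] {c : M} {w : V → M}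

theorem ncard_nsmul_le_sum_neighborFinset (hw_nonneg : ∀ j, 0 ≤ w j)
    (hw : ∀ j ∉ leaves H, c ≤ w j) (i : V) :
    (H.neighborSet i \ leaves H).ncard • c ≤ ∑ j ∈ H.neighborFinset i, w j := by
  classical
  have hcard : (H.neighborSet i \ leaves H).ncard
      = {j ∈ H.neighborFinset i | j ∉ leaves H}.card := by
    rw [← Set.ncard_coe_finset]
    congr 1
    ext j
    simp
  calc (H.neighborSet i \ leaves H).ncard • c
      ≤ ∑ j ∈ H.neighborFinset i with j ∉ leaves H, w j :=
        hcard ▸ Finset.card_nsmul_le_sum _ _ _ fun j hj => hw j (Finset.mem_filter.mp hj).2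
    _ ≤ ∑ j ∈ H.neighborFinset i, w j :=
        Finset.sum_le_sum_of_subset_of_nonneg (Finset.filter_subset _ _) fun j _ _ => hw_nonneg j

theorem ncard_add_one_nsmul_le_of_notMem_leaves (hc : 0 ≤ c) (hw_nonneg : ∀ j, 0 ≤ w j)
    (hw : ∀ j ∉ leaves H, ((leafNeighbors H j).ncard + 1) • c ≤ w j) {i : V}
    (hi : i ∉ leaves H) :
    ((H.neighborSet i).ncard + 1) • c ≤ w i + ∑ j ∈ H.neighborFinset i, w j := by
  have hw_unit : ∀ j ∉ leaves H, c ≤ w j := fun j hj =>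
    calc c = 1 • c := (one_nsmul c).symm
      _ ≤ ((leafNeighbors H j).ncard + 1) • c := nsmul_le_nsmul_left hc (Nat.le_add_left 1 _)
      _ ≤ w j := hw j hj
  have hsplit : (H.neighborSet i).ncard + 1
      = (leafNeighbors H i).ncard + 1 + (H.neighborSet i \ leaves H).ncard := by
    rw [← Set.ncard_inter_add_ncard_sdiff_eq_ncard (H.neighborSet i) (leaves H), leafNeighbors]
    ring
  rw [hsplit, add_nsmul]
  exact add_le_add (hw i hi) (ncard_nsmul_le_sum_neighborFinset hw_nonneg hw_unit i)

theorem three_nsmul_le_of_mem_leaves (hc : 0 ≤ c) (hw_nonneg : ∀ j, 0 ≤ w j)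
    (hw : ∀ j ∉ leaves H, ((leafNeighbors H j).ncard + 1) • c ≤ w j) {i : V}
    (hi : i ∈ leaves H) (hadj : ∀ j, H.Adj i j → (leafNeighbors H j).ncard ≠ 1) :
    3 • c ≤ w i + ∑ j ∈ H.neighborFinset i, w j := by
  obtain ⟨j, hj⟩ := Set.ncard_eq_one.mp hi
  have hij : H.Adj i j := hj.symm.subset rfl
  have htwo := two_le_ncard_leafNeighbors hij hi (hadj j hij)
  calc 3 • c ≤ ((leafNeighbors H j).ncard + 1) • c := nsmul_le_nsmul_left hc (by omega)
    _ ≤ w j := hw j (notMem_leaves_of_two_le_ncard_leafNeighbors htwo)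
    _ ≤ ∑ k ∈ H.neighborFinset i, w k :=
        Finset.single_le_sum (fun k _ => hw_nonneg k) ((H.mem_neighborFinset i j).mpr hij)
    _ ≤ w i + ∑ k ∈ H.neighborFinset i, w k := le_add_of_nonneg_left (hw_nonneg i)

theorem three_nsmul_le_add_sum_neighborFinset (hc : 0 ≤ c) (hw_nonneg : ∀ j, 0 ≤ w j)
    (hw : ∀ j ∉ leaves H, ((leafNeighbors H j).ncard + 1) • c ≤ w j) {i : V}
    (hne : (H.neighborSet i).Nonempty)
    (hadj : i ∈ leaves H → ∀ j, H.Adj i j → (leafNeighbors H j).ncard ≠ 1) :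
    3 • c ≤ w i + ∑ j ∈ H.neighborFinset i, w j := by
  by_cases hi : i ∈ leaves H
  · exact three_nsmul_le_of_mem_leaves hc hw_nonneg hw hi (hadj hi)
  · have hdeg := two_le_ncard_neighborSet hne hi
    exact (nsmul_le_nsmul_left hc (by omega)).trans
      (ncard_add_one_nsmul_le_of_notMem_leaves hc hw_nonneg hw hi)

end LeafWeights

open Classical in
theorem sum_ite_eq_or_adj {V M : Type*} [Fintype V] [AddCommMonoid M] (H : SimpleGraph V)
    (w : V → M) (i : V) :
    ∑ j, (if j = i ∨ H.Adj i j then w j else 0) = w i + ∑ j ∈ H.neighborFinset i, w j := by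
  rw [← Finset.sum_filter, ← Finset.sum_insert (H.notMem_neighborFinset_self i)]
  congr 1
  ext j
  simp

open Classical in
theorem stmt14_general {V K : Type*} [Semifield K] [LinearOrder K] [IsStrictOrderedRing K]
    (H : SimpleGraph V) [H.LocallyFinite] {u : K} (hu : 0 < u) {w : V → K}
    (hw : ∀ i : V, w i =
      if (H.neighborSet i).ncard ≠ 1 then ((leafNeighbors H i).ncard + 1) / u
      else if (H.connectedComponentMk i).supp.ncard = 2 then 1 / u
      else 0)
    {i : V}
    (hi : i ∉ {v : V | (H.neighborSet v).ncard = 0}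
      ∪ {v : V | v ∈ leaves H ∧
          (H.neighborSet v ∩ {j : V | (leafNeighbors H j).ncard = 1}).Nonempty}) :
    3 / u ≤ w i + ∑ j ∈ H.neighborFinset i, w j := by
  have hw_nonneg (j : V) : 0 ≤ w j := by
    rw [hw j]
    split_ifs <;> positivity
  have hw_nonleaf (j : V) (hj : j ∉ leaves H) :
      ((leafNeighbors H j).ncard + 1) • (1 / u) ≤ w j := by
    rw [hw j, if_pos (show (H.neighborSet j).ncard ≠ 1 from hj), nsmul_eq_mul, mul_one_div,
      Nat.cast_succ]
  have hne : (H.neighborSet i).Nonempty := Set.nonempty_of_ncard_ne_zero fun h => hi (Or.inl h)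
  have hthree : 3 • (1 / u) ≤ w i + ∑ j ∈ H.neighborFinset i, w j :=
    three_nsmul_le_add_sum_neighborFinset (by positivity) hw_nonneg hw_nonleaf hne
      fun hleaf j hij hj => hi (Or.inr ⟨hleaf, j, hij, hj⟩)
  rwa [nsmul_eq_mul, mul_one_div, Nat.cast_ofNat] at hthree

open Classical in
theorem stmt14 {V : Type*} [Fintype V] (H : SimpleGraph V)
    (u : ℕ) (hu : u = Fintype.card V) (hu1 : 1 ≤ u)
    (w : V → ℝ)
    (hw : ∀ i : V, w i =
      if (H.neighborSet i).ncard ≠ 1 then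
        (((H.neighborSet i ∩ {x : V | (H.neighborSet x).ncard = 1}).ncard : ℝ) + 1) / u
      else if (H.connectedComponentMk i).supp.ncard = 2 then 1 / (u : ℝ)
      else 0) :
    ∀ i : V,
      i ∉ ({v : V | (H.neighborSet v).ncard = 0}
            ∪ {v : V | (H.neighborSet v).ncard = 1 ∧
                (H.neighborSet v ∩
                  {j : V | (H.neighborSet j ∩ {x : V | (H.neighborSet x).ncard = 1}).ncard = 1}).Nonempty}
            ∪ {v : V | (H.connectedComponentMk v).supp.ncard = 2}) →
      3 / (u : ℝ) ≤ ∑ j : V, (if j = i ∨ H.Adj i j then w j else 0) := by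
  intro i hi
  rw [sum_ite_eq_or_adj]
  exact stmt14_general H (Nat.cast_pos.mpr hu1) hw fun h => hi (Or.inl h)
end

section
/- Let f : ℝ≥0 → ℝ≥0 be strictly increasing and concave with f(0) = 0. Then for every natural n ≥ 4 and every natural s with 0 ≤ s ≤ n−4, T(n,s) < 0; in particular T(n,s) < β for every β ≥ 0. -/
open scoped NNReal

noncomputable section

/-! With `k = n - s - 2`, the claim reads `(k - 1) * f (k + 1) < k * f k`. For a concave `f` with
`0 ≤ f 0` the ratio `f x / x` is antitone, so `k * f (k + 1) ≤ (k + 1) * f k`. When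
`f (k + 1)` is positive, this gives
`(k + 1) * ((k - 1) * f (k + 1)) < k ^ 2 * f (k + 1) ≤ (k + 1) * (k * f k)`.
The value `f (k + 1)` is positive since `f` is positive somewhere: every `x > 0` is interior to a
segment starting at such a point, and a nonnegative concave function cannot vanish there. -/

section Concave

variable {𝕜 E β : Type*} [AddCommMonoid β] [PartialOrder β] [IsOrderedAddMonoid β]

section Semiring

variable [Semiring 𝕜] [PartialOrder 𝕜] [AddCommMonoid E] [Module 𝕜 E] [Module 𝕜 β]
  {s : Set E} {f : E → β}

theorem smul_map_le_map_smul_of_concaveOn [IsOrderedCancelAddMonoid 𝕜] [ExistsAddOfLE 𝕜]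
    [PosSMulMono 𝕜 β] (hf : ConcaveOn 𝕜 s f) (h0s : 0 ∈ s) (h0 : 0 ≤ f 0) {x : E} (hx : x ∈ s)
    {t : 𝕜} (ht₀ : 0 ≤ t) (ht₁ : t ≤ 1) : t • f x ≤ f (t • x) := by
  obtain ⟨c, hc⟩ := exists_add_of_le ht₁
  have hc₀ : 0 ≤ c := le_of_add_le_add_left (a := t) (by rwa [add_zero, ← hc])
  calc t • f x ≤ t • f x + c • f 0 := le_add_of_nonneg_right (smul_nonneg hc₀ h0)
    _ ≤ f (t • x + c • 0) := hf.2 hx h0s ht₀ hc₀ hc.symm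
    _ = f (t • x) := by rw [smul_zero, add_zero]

theorem map_pos_of_concaveOn_of_mem_openSegment [PosSMulStrictMono 𝕜 β] (hf : ConcaveOn 𝕜 s f)
    {x y z : E} (hx : x ∈ s) (hy : y ∈ s) (hfx : 0 < f x) (hfy : 0 ≤ f y)
    (hz : z ∈ openSegment 𝕜 x y) : 0 < f z := by
  obtain ⟨a, b, ha, hb, hab, rfl⟩ := hz
  calc 0 < a • f x + b • f y :=
        add_pos_of_pos_of_nonneg (smul_pos ha hfx) (smul_nonneg hb.le hfy)
    _ ≤ f (a • x + b • y) := hf.2 hx hy ha.le hb.le hab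

end Semiring

section Semifield

variable [Semifield 𝕜] [LinearOrder 𝕜] [IsStrictOrderedRing 𝕜]

theorem exists_nonneg_mem_openSegment {a x : 𝕜} (ha : 0 ≤ a) (hx : 0 < x) :
    ∃ y, 0 ≤ y ∧ x ∈ openSegment 𝕜 a y := by
  refine ⟨x * (x + 1) / (a + 1), by positivity, x / (x + (a + 1)), (a + 1) / (x + (a + 1)),
    by positivity, by positivity, ?_, ?_⟩
  · rw [← add_div, div_self (by positivity)]
  · simp only [smul_eq_mul]
    field_simp
    ring

variable [Module 𝕜 β] {f : 𝕜 → β}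

theorem smul_map_le_smul_map_of_concaveOn [ExistsAddOfLE 𝕜] [PosSMulMono 𝕜 β] {s : Set 𝕜}
    (hf : ConcaveOn 𝕜 s f) (h0s : 0 ∈ s) (h0 : 0 ≤ f 0) {x y : 𝕜} (hy : y ∈ s)
    (hx : 0 ≤ x) (hxy : x ≤ y) : x • f y ≤ y • f x := by
  obtain rfl | hy₀ := (hx.trans hxy).eq_or_lt
  · rw [le_antisymm hxy hx]
  have hscale : (x / y) • f y ≤ f x := by
    simpa only [smul_eq_mul, div_mul_cancel₀ x hy₀.ne'] using
      smul_map_le_map_smul_of_concaveOn hf h0s h0 hy (div_nonneg hx hy₀.le)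
        (div_le_one_of_le₀ hxy hy₀.le)
  calc x • f y = y • (x / y) • f y := by rw [smul_smul, mul_div_cancel₀ x hy₀.ne']
    _ ≤ y • f x := smul_le_smul_of_nonneg_left hscale hy₀.le

theorem map_pos_of_concaveOn_Ici [PosSMulStrictMono 𝕜 β] (hf : ConcaveOn 𝕜 (Set.Ici 0) f)
    (hf₀ : ∀ x, 0 ≤ x → 0 ≤ f x) {a : 𝕜} (ha : 0 ≤ a) (hfa : 0 < f a) {x : 𝕜} (hx : 0 < x) :
    0 < f x := by
  obtain ⟨y, hy, hxy⟩ := exists_nonneg_mem_openSegment ha hx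
  exact map_pos_of_concaveOn_of_mem_openSegment hf ha hy hfa (hf₀ y hy) hxy

end Semifield

end Concave

section NNReal

variable {f : ℝ≥0 → ℝ≥0}

theorem map_pos_of_concaveOn_univ (hf : ConcaveOn ℝ≥0 Set.univ f) (hne : f ≠ 0) {x : ℝ≥0}
    (hx : 0 < x) : 0 < f x := by
  obtain ⟨a, ha⟩ := Function.ne_iff.mp hne
  exact map_pos_of_concaveOn_Ici (hf.subset (Set.subset_univ _) (convex_Ici 0))
    (fun _ _ ↦ zero_le) zero_le (pos_iff_ne_zero.mpr ha) hx

theorem sub_mul_map_add_lt_mul_map_of_concaveOn (hf : ConcaveOn ℝ≥0 Set.univ f) (hne : f ≠ 0)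
    (x : ℝ≥0) {h : ℝ≥0} (hh : 0 < h) : ((x : ℝ) - h) * f (x + h) < x * f x := by
  have hpos : (0 : ℝ) < f (x + h) :=
    NNReal.coe_pos.mpr (map_pos_of_concaveOn_univ hf hne (add_pos_of_nonneg_of_pos zero_le hh))
  have hratio : (x : ℝ) * f (x + h) ≤ (x + h) * f x :=
    mod_cast smul_map_le_smul_map_of_concaveOn hf (Set.mem_univ 0) zero_le (Set.mem_univ (x + h))
      zero_le (le_add_of_nonneg_right zero_le)
  refine lt_of_mul_lt_mul_left ?_ (by positivity : (0 : ℝ) ≤ x + h)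
  calc ((x : ℝ) + h) * ((x - h) * f (x + h)) = (x ^ 2 - h ^ 2) * f (x + h) := by ring
    _ < x ^ 2 * f (x + h) := by gcongr; exact sub_lt_self _ (pow_pos (NNReal.coe_pos.mpr hh) 2)
    _ = x * (x * f (x + h)) := by ring
    _ ≤ x * ((x + h) * f x) := by gcongr
    _ = (x + h) * (x * f x) := by ring

theorem Tval_add_two_add (f : ℝ≥0 → ℝ≥0) (s k : ℕ) :
    Tval f (s + 2 + k) s = ((k : ℝ) - 1) * f (k + 1) - k * f k := by
  have h₁ : s + 2 + k - s - 1 = k + 1 := by omega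
  have h₂ : s + 2 + k - s - 2 = k := by omega
  rw [Tval, h₁, h₂]
  push_cast
  ring

theorem stmt16_general (hf : ConcaveOn ℝ≥0 Set.univ f) (hne : f ≠ 0) {n s : ℕ} (hs : s + 2 ≤ n) :
    Tval f n s < 0 := by
  obtain ⟨k, rfl⟩ := Nat.exists_eq_add_of_le hs
  rw [Tval_add_two_add, sub_neg]
  simpa using sub_mul_map_add_lt_mul_map_of_concaveOn hf hne (k : ℝ≥0) one_pos

end NNReal

theorem stmt16 (f : ℝ≥0 → ℝ≥0) (hf : StrictMono f) (hf0 : f 0 = 0)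
    (hconc : ConcaveOn ℝ≥0 Set.univ f)
    (n : ℕ) (hn : 4 ≤ n) (s : ℕ) (hs : s + 4 ≤ n) :
    Tval f n s < 0 ∧ ∀ β : ℝ, 0 ≤ β → Tval f n s < β := by
  have hneg : Tval f n s < 0 :=
    stmt16_general hconc (fun h ↦ by simpa [h] using hf one_pos) (by omega)
  exact ⟨hneg, fun _ hβ ↦ hneg.trans_le hβ⟩
end
end

section
/- Let λ > 0, let f(x) = λ·x for all x ≥ 0, let β ≥ 0, set β̃ = β/λ, and let n ≥ 6 be a natural number. Define Ã(n,s) = λ·( 2(β̃−2)/(n−s) + 4 − (n−s) ) for 0 ≤ s ≤ n−2, B(s) = λ·( (β̃+1)/s − 1 ) for 1 ≤ s ≤ n, and Q̃(n,s) = Ã(n,s) if s = 0 or Ã(n,s) ≤ −λ, Q̃(n,s) = ( Ã(n,s)·B(s) − λ²·(n−s) )/( Ã(n,s) + B(s) + λ + λ(n−s) ) if 1 ≤ s ≤ n−2 and Ã(n,s) > −λ, and Q̃(n,n) = B(n). Then for every natural s with 2 ≤ s ≤ n−4, Q̃(n,s) > min( Q̃(n,0), Q̃(n,1), Q̃(n,n)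 ); in particular, the minimum of Q̃(n,·) over {0,1,…,n−4} ∪ {n} is attained at s = 0, s = 1, or s = n. -/
/-!
Write `b = β / λ`, `m = n - s`, `N = 2 (b - 2) + 5 m - m²` and
`K = (n - 4) m - (n - 6) - (b + 1)`. Then `A = λ (N / m - 1)`, so for `0 < s < n` the first branch
of `Q` is taken exactly when `N ≤ 0`. In terms of `u = A / λ + 1` and `v = B / λ + 1` the mixed
payoff is `λ (u v / (u + v + m - 1) - 1)`, which for `N > 0` equals `B(D)` with the real number
`D = n + m K / N`: the network is worth as much to the seeker as `D` isolated vertices. Since `B`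
is decreasing, it remains to compare values of `D`. If `K < 0`, then `D < n` and `Q(n) < Q(s)`. If
`K ≥ 0`, then `m K / N` increases with `m`, so `Q(1) < Q(s)`, unless `N ≤ 0` already at `s = 1`,
in which case `Q(1) ≤ -λ < B(D)`. In the regime `N ≤ 0` the payoff is `A`,
which is smaller at `s = 0`.
-/

/-- The payoff `A` of the paper when the maximal core-periphery component has `m = n - s`
vertices. -/
noncomputable def componentPayoff (lam b m : ℝ) : ℝ :=
  lam * (2 * (b - 2) / m + 4 - m)

/-- The payoff `B` of the paper on `t` isolated vertices; `t` is real because the interior payoffs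
are values of this function at non-integer arguments. -/
noncomputable def isolatedPayoff (lam b t : ℝ) : ℝ :=
  lam * ((b + 1) / t - 1)

/-- The interior branch of the payoff `Q` of the paper, for a component of `m` vertices and `s`
isolated vertices. -/
noncomputable def mixedPayoff (lam b m s : ℝ) : ℝ :=
  (componentPayoff lam b m * isolatedPayoff lam b s - lam ^ 2 * m) /
    (componentPayoff lam b m + isolatedPayoff lam b s + lam + lam * m)

/-- The seeker's guaranteed payoff `Q` on `n` vertices of which `s` are isolated. The case
`s = n - 1` carries no meaning, a component having at least two vertices. -/
noncomputable def seekerPayoff (lam b : ℝ) (n s : ℕ) : ℝ :=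
  if s = 0 ∨ componentPayoff lam b (n - s) ≤ -lam then componentPayoff lam b (n - s)
  else if s + 2 ≤ n then mixedPayoff lam b (n - s) s
  else isolatedPayoff lam b n

/-- The numerator `N` of `A / λ + 1` over the denominator `m`; its sign selects the branch
of `Q`. -/
def componentSurplus (b m : ℝ) : ℝ :=
  2 * (b - 2) + 5 * m - m ^ 2

/-- The quantity `K` whose sign decides whether a component of `m` vertices makes the effective
size exceed `n`. -/
def sizeExcess (b n m : ℝ) : ℝ :=
  (n - 4) * m - (n - 6) - (b + 1)

/-- The number of isolated vertices giving the seeker the same payoff as a component of `m` among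
`n` vertices. -/
noncomputable def effectiveSize (b n m : ℝ) : ℝ :=
  n + m * sizeExcess b n m / componentSurplus b m

section Component

variable {lam b m n : ℝ}

lemma componentPayoff_eq (hm : m ≠ 0) :
    componentPayoff lam b m = lam * (componentSurplus b m / m - 1) := by
  unfold componentPayoff componentSurplus
  field_simp
  ring

lemma componentPayoff_le_neg_iff (hlam : 0 < lam) (hm : 0 < m) :
    componentPayoff lam b m ≤ -lam ↔ componentSurplus b m ≤ 0 := by
  rw [componentPayoff_eq hm.ne', ← mul_neg_one, mul_le_mul_iff_right₀ hlam, sub_le_iff_le_add,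
    neg_add_cancel, div_le_iff₀ hm, zero_mul]

lemma componentPayoff_lt_componentPayoff (hlam : 0 < lam) (hm : 0 < m) (hmn : m < n)
    (h : 2 * (2 - b) < m * n) : componentPayoff lam b n < componentPayoff lam b m := by
  have hn : 0 < n := hm.trans hmn
  have : 0 < 2 * (b - 2) + m * n := by linarith
  have hsub : componentPayoff lam b m - componentPayoff lam b n =
      lam * ((n - m) * (2 * (b - 2) + m * n) / (m * n)) := by
    unfold componentPayoff
    field_simp
    ring
  have : 0 < n - m := sub_pos.mpr hmn
  rw [← sub_pos, hsub]
  positivity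

lemma componentSurplus_lt_componentSurplus (hmn : m < n) (h : 5 < m + n) :
    componentSurplus b n < componentSurplus b m := by
  unfold componentSurplus
  linarith [mul_pos (sub_pos.mpr hmn) (sub_pos.mpr h)]

end Component

section Isolated

variable {lam b t u : ℝ}

lemma isolatedPayoff_lt_isolatedPayoff (hlam : 0 < lam) (hb : -1 < b) (ht : 0 < t) (htu : t < u) :
    isolatedPayoff lam b u < isolatedPayoff lam b t := by
  have : 0 < b + 1 := by linarith
  unfold isolatedPayoff
  gcongr

lemma neg_lt_isolatedPayoff (hlam : 0 < lam) (hb : -1 < b) (ht : 0 < t) :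
    -lam < isolatedPayoff lam b t := by
  have : 0 < lam * ((b + 1) / t) := mul_pos hlam (div_pos (by linarith) ht)
  unfold isolatedPayoff
  linarith

end Isolated

section EffectiveSize

variable {lam b n m r : ℝ}

lemma effectiveSize_eq (hN : componentSurplus b m ≠ 0) :
    effectiveSize b n m =
      n - m + m * (b + 1 + (m - 1) * (n - m)) / componentSurplus b m := by
  have hK : sizeExcess b n m = b + 1 + (m - 1) * (n - m) - componentSurplus b m := by
    unfold sizeExcess componentSurplus
    ring
  rw [effectiveSize, hK]
  field_simp
  ring

lemma effectiveSize_pos (hb : -1 < b) (hm : 1 ≤ m) (hmn : m < n)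
    (hN : 0 < componentSurplus b m) : 0 < effectiveSize b n m := by
  have hc : 0 < b + 1 := by linarith
  have : 0 ≤ m - 1 := sub_nonneg.mpr hm
  have : 0 < n - m := sub_pos.mpr hmn
  rw [effectiveSize_eq hN.ne']
  positivity

lemma effectiveSize_lt_self (hm : 0 < m) (hN : 0 < componentSurplus b m)
    (hK : sizeExcess b n m < 0) : effectiveSize b n m < n :=
  add_lt_of_neg_right n (div_neg_of_neg_of_pos (mul_neg_of_pos_of_neg hm hK) hN)

lemma sizeExcess_strictMono (hn : 4 < n) : StrictMono (sizeExcess b n) := by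
  intro m r hmr
  unfold sizeExcess
  linarith [mul_lt_mul_of_pos_left hmr (sub_pos.mpr hn)]

lemma effectiveSize_lt_effectiveSize (hn : 4 < n) (hm : 0 ≤ m) (hmr : m < r) (h : 5 < m + r)
    (hN : 0 < componentSurplus b r) (hK : 0 ≤ sizeExcess b n m) :
    effectiveSize b n m < effectiveSize b n r := by
  have hmK : m * sizeExcess b n m < r * sizeExcess b n r :=
    mul_lt_mul'' hmr (sizeExcess_strictMono hn hmr) hm hK
  have hNN : componentSurplus b r < componentSurplus b m :=
    componentSurplus_lt_componentSurplus hmr h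
  exact add_lt_add_right (div_lt_div₀ hmK hNN.le ((mul_nonneg hm hK).trans hmK.le) hN) n

lemma mixed_mul_sub_one {u v : ℝ} (hlam : lam ≠ 0) (h : u + v + m - 1 ≠ 0) :
    (lam * (u - 1) * (lam * (v - 1)) - lam ^ 2 * m) /
      (lam * (u - 1) + lam * (v - 1) + lam + lam * m) =
      lam * (u * v / (u + v + m - 1) - 1) := by
  have hden : lam * (u - 1) + lam * (v - 1) + lam + lam * m = lam * (u + v + m - 1) := by ring
  rw [hden]
  field_simp
  ring

lemma mixedPayoff_eq_isolatedPayoff (hlam : lam ≠ 0) (hb : -1 < b) (hm : 1 ≤ m) (hmn : m < n)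
    (hN : 0 < componentSurplus b m) :
    mixedPayoff lam b m (n - m) = isolatedPayoff lam b (effectiveSize b n m) := by
  have hc : 0 < b + 1 := by linarith
  have hm₀ : 0 < m := by linarith
  have hs : 0 < n - m := sub_pos.mpr hmn
  have hden : 0 < componentSurplus b m / m + (b + 1) / (n - m) + m - 1 := by
    have : 0 < componentSurplus b m / m + (b + 1) / (n - m) := by positivity
    linarith
  have hD : componentSurplus b m / m * ((b + 1) / (n - m)) /
      (componentSurplus b m / m + (b + 1) / (n - m) + m - 1) =
      (b + 1) / effectiveSize b n m := by
    rw [div_eq_div_iff hden.ne' (effectiveSize_pos hb hm hmn hN).ne', effectiveSize_eq hN.ne']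
    field_simp
    ring
  rw [mixedPayoff, componentPayoff_eq hm₀.ne', isolatedPayoff, mixed_mul_sub_one hlam hden.ne', hD,
    isolatedPayoff]

end EffectiveSize

section Seeker

variable {lam b : ℝ} {n s : ℕ}

lemma seekerPayoff_zero : seekerPayoff lam b n 0 = componentPayoff lam b n := by
  simp [seekerPayoff]

lemma seekerPayoff_self (hlam : 0 < lam) (hn : n ≠ 0) :
    seekerPayoff lam b n n = isolatedPayoff lam b n := by
  -- Here `m = 0`, and division by zero makes `componentPayoff` equal to `4 * lam`.
  have hA : ¬componentPayoff lam b (n - n) ≤ -lam := by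
    simp only [componentPayoff, sub_self, div_zero]
    linarith
  rw [seekerPayoff, if_neg (not_or_intro hn hA), if_neg (by lia)]

lemma seekerPayoff_of_nonpos (hlam : 0 < lam) (hsn : s < n)
    (hN : componentSurplus b (n - s) ≤ 0) :
    seekerPayoff lam b n s = componentPayoff lam b (n - s) := by
  have hm : (0 : ℝ) < n - s := sub_pos.mpr (by exact_mod_cast hsn)
  rw [seekerPayoff, if_pos (Or.inr ((componentPayoff_le_neg_iff hlam hm).mpr hN))]

lemma seekerPayoff_of_pos (hlam : 0 < lam) (hb : -1 < b) (hs : s ≠ 0) (hsn : s + 2 ≤ n)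
    (hN : 0 < componentSurplus b (n - s)) :
    seekerPayoff lam b n s = isolatedPayoff lam b (effectiveSize b n (n - s)) := by
  have hs₀ : (0 : ℝ) < s := by positivity
  have hm : (2 : ℝ) ≤ n - s := by
    have : (s : ℝ) + 2 ≤ n := by exact_mod_cast hsn
    linarith
  have hA : ¬componentPayoff lam b (n - s) ≤ -lam := by
    rw [componentPayoff_le_neg_iff hlam (by linarith)]
    exact hN.not_ge
  rw [seekerPayoff, if_neg (not_or_intro hs hA), if_pos hsn,
    ← mixedPayoff_eq_isolatedPayoff hlam.ne' hb (by linarith) (by linarith) hN, sub_sub_cancel]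

lemma seekerPayoff_zero_lt (hlam : 0 < lam) (hb : -1 < b) (hn : 5 ≤ n) (hs : s ≠ 0)
    (hsn : s + 2 ≤ n) (hN : componentSurplus b (n - s) ≤ 0) :
    seekerPayoff lam b n 0 < seekerPayoff lam b n s := by
  have hs₀ : (0 : ℝ) < s := by positivity
  have hn' : (5 : ℝ) ≤ n := by exact_mod_cast hn
  have hsn' : (s : ℝ) + 2 ≤ n := by exact_mod_cast hsn
  have hmn : (2 : ℝ) * 5 ≤ (n - s) * n := by
    gcongr <;> linarith
  rw [seekerPayoff_zero, seekerPayoff_of_nonpos hlam (by lia) hN]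
  exact componentPayoff_lt_componentPayoff hlam (by linarith) (by linarith) (by linarith)

lemma min_seekerPayoff_one_self_lt (hlam : 0 < lam) (hb : -1 < b) (hn : 5 ≤ n) (hs : 2 ≤ s)
    (hsn : s + 2 ≤ n) (hN : 0 < componentSurplus b (n - s)) :
    min (seekerPayoff lam b n 1) (seekerPayoff lam b n n) < seekerPayoff lam b n s := by
  have hn' : (5 : ℝ) ≤ n := by exact_mod_cast hn
  have hs' : (2 : ℝ) ≤ s := by exact_mod_cast hs
  have hsn' : (s : ℝ) + 2 ≤ n := by exact_mod_cast hsn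
  have hD : 0 < effectiveSize b n (n - s) :=
    effectiveSize_pos hb (by linarith) (by linarith) hN
  rw [seekerPayoff_of_pos hlam hb (by lia) hsn hN]
  rcases lt_or_ge (sizeExcess b n (n - s)) 0 with hK | hK
  · apply min_lt_of_right_lt
    rw [seekerPayoff_self hlam (by lia)]
    exact isolatedPayoff_lt_isolatedPayoff hlam hb hD
      (effectiveSize_lt_self (by linarith) hN hK)
  apply min_lt_of_left_lt
  rcases le_or_gt (componentSurplus b (n - (1 : ℕ))) 0 with hN₁ | hN₁
  · calc seekerPayoff lam b n 1
        = componentPayoff lam b (n - (1 : ℕ)) := seekerPayoff_of_nonpos hlam (by lia) hN₁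
      _ ≤ -lam := (componentPayoff_le_neg_iff hlam (by push_cast; linarith)).mpr hN₁
      _ < isolatedPayoff lam b (effectiveSize b n (n - s)) := neg_lt_isolatedPayoff hlam hb hD
  · rw [seekerPayoff_of_pos hlam hb one_ne_zero (by lia) hN₁]
    refine isolatedPayoff_lt_isolatedPayoff hlam hb hD
      (effectiveSize_lt_effectiveSize (by linarith) (by linarith) ?_ ?_ hN₁ hK) <;>
    · push_cast
      linarith

lemma min_seekerPayoff_lt (hlam : 0 < lam) (hb : -1 < b) (hn : 5 ≤ n) (hs : 2 ≤ s)
    (hsn : s + 2 ≤ n) :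
    min (seekerPayoff lam b n 0) (min (seekerPayoff lam b n 1) (seekerPayoff lam b n n)) <
      seekerPayoff lam b n s := by
  rcases le_or_gt (componentSurplus b (n - s)) 0 with hN | hN
  · exact min_lt_of_left_lt (seekerPayoff_zero_lt hlam hb hn (by lia) hsn hN)
  · exact min_lt_of_right_lt (min_seekerPayoff_one_self_lt hlam hb hn hs hsn hN)

end Seeker

theorem stmt19_general {lam b : ℝ} (hlam : 0 < lam) (hb : -1 < b) {n : ℕ} (hn : 5 ≤ n) :
    (∀ s : ℕ, 2 ≤ s → s + 2 ≤ n →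
      min (seekerPayoff lam b n 0) (min (seekerPayoff lam b n 1) (seekerPayoff lam b n n)) <
        seekerPayoff lam b n s) ∧
    ∃ s₀ : ℕ, (s₀ = 0 ∨ s₀ = 1 ∨ s₀ = n) ∧
      ∀ s : ℕ, (s + 2 ≤ n ∨ s = n) → seekerPayoff lam b n s₀ ≤ seekerPayoff lam b n s := by
  refine ⟨fun s ↦ min_seekerPayoff_lt hlam hb hn, ?_⟩
  obtain ⟨s₀, hs₀, hle⟩ :=
    Finset.exists_min_image {0, 1, n} (seekerPayoff lam b n) (Finset.insert_nonempty _ _)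
  simp only [Finset.mem_insert, Finset.mem_singleton, forall_eq_or_imp, forall_eq] at hs₀ hle
  obtain ⟨hle_zero, hle_one, hle_self⟩ := hle
  refine ⟨s₀, hs₀, ?_⟩
  rintro s (hsn | rfl)
  · match s, hsn with
    | 0, _ => exact hle_zero
    | 1, _ => exact hle_one
    | s + 2, hsn =>
      exact (le_min hle_zero (le_min hle_one hle_self)).trans
        (min_seekerPayoff_lt hlam hb hn (by lia) hsn).le
  · exact hle_self

theorem stmt19 (lam β : ℝ) (hlam : 0 < lam) (hβ : 0 ≤ β)
    (f : ℝ → ℝ) (hf : ∀ x : ℝ, f x = lam * x)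
    (βt : ℝ) (hβt : βt = β / lam)
    (n : ℕ) (hn : 6 ≤ n)
    (Atil B Qtil : ℕ → ℝ)
    (hA : ∀ s : ℕ, Atil s = lam * (2 * (βt - 2) / ((n : ℝ) - s) + 4 - ((n : ℝ) - s)))
    (hB : ∀ s : ℕ, B s = lam * ((βt + 1) / (s : ℝ) - 1))
    (hQ : ∀ s : ℕ, Qtil s =
      if s = 0 ∨ Atil s ≤ -lam then Atil s
      else if s + 2 ≤ n then
        (Atil s * B s - lam ^ 2 * ((n : ℝ) - s)) /
          (Atil s + B s + lam + lam * ((n : ℝ) - s))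
      else B n) :
    (∀ s : ℕ, 2 ≤ s → s + 4 ≤ n →
      min (Qtil 0) (min (Qtil 1) (Qtil n)) < Qtil s) ∧
    ∃ s₀ : ℕ, (s₀ = 0 ∨ s₀ = 1 ∨ s₀ = n) ∧
      ∀ s : ℕ, (s + 4 ≤ n ∨ s = n) → Qtil s₀ ≤ Qtil s := by
  have hb : -1 < βt := by rw [hβt]; linarith [div_nonneg hβ hlam.le]
  have hQs : Qtil = seekerPayoff lam βt n := by
    funext s
    simp only [hQ, hA, hB]
    rfl
  subst hQs
  obtain ⟨hlt, s₀, hs₀, hle⟩ := stmt19_general hlam hb (n := n) (by lia)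
  exact ⟨fun s hs hsn ↦ hlt s hs (by lia), s₀, hs₀, fun s hs ↦ hle s (by lia)⟩
end
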